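/- Moment transfer identity (equation (formest)). Let (l_{i1},l_{i2},l_{i3}), i = 1,…,I, be triples of positive integers with l_{i1} ≤ l_{i2} ≤ l_{i3} and l_{i1}+l_{i2}+l_{i3} even, and let p₁,…,p_I be positive integers. Then E[ ∏_{i=1}^{I} Î_{l_{i1}l_{i2}l_{i3}}^{2p_i} ] = E[ ∏_{i=1}^{I} I_{l_{i1}l_{i2}l_{i3}}^{2p_i} ] · G[(l_{11},l_{12},l_{13}),…,(l_{I1},l_{I2},l_{I3}); p₁,…,p_I]. -/

import Mathlib

open MeasureTheory ProbabilityTheory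

noncomputable section


/-- Factorial of an integer (the factorial of its nonnegative part). -/
def zfact (z : ℤ) : ℕ := Nat.factorial z.toNat

/-- The range `-l, ..., l` of projection quantum numbers for multipole `l`. -/
def mrange (l : ℕ) : Finset ℤ := Finset.Icc (-(l : ℤ)) l

/-- The Wigner 3j symbol, defined by the Racah factorial sum formula; it vanishes
unless `m₁ + m₂ + m₃ = 0`, `|mᵢ| ≤ lᵢ` and the triangle conditions hold. -/
def w3j (l₁ l₂ l₃ : ℕ) (m₁ m₂ m₃ : ℤ) : ℝ :=
  if m₁ + m₂ + m₃ = 0 ∧ m₁.natAbs ≤ l₁ ∧ m₂.natAbs ≤ l₂ ∧ m₃.natAbs ≤ l₃ ∧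
      l₃ ≤ l₁ + l₂ ∧ l₁ ≤ l₂ + l₃ ∧ l₂ ≤ l₁ + l₃ then
    (-1 : ℝ) ^ ((l₃ : ℤ) + m₃ + l₂ + m₂) *
    Real.sqrt (((zfact ((l₁ : ℤ) + l₂ - l₃) * zfact ((l₁ : ℤ) - l₂ + l₃) *
        zfact (-(l₁ : ℤ) + l₂ + l₃) : ℕ) : ℝ) / ((zfact ((l₁ : ℤ) + l₂ + l₃ + 1) : ℕ) : ℝ)) *
    Real.sqrt (((zfact ((l₃ : ℤ) + m₃) * zfact ((l₃ : ℤ) - m₃) : ℕ) : ℝ) /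
      ((zfact ((l₁ : ℤ) + m₁) * zfact ((l₁ : ℤ) - m₁) * zfact ((l₂ : ℤ) + m₂) *
        zfact ((l₂ : ℤ) - m₂) : ℕ) : ℝ)) *
    ∑ z ∈ Finset.range (l₁ + l₂ + l₃ + 1),
      if (l₂ : ℤ) + l₃ + m₁ - z ≥ 0 ∧ (l₁ : ℤ) - m₁ + z ≥ 0 ∧ (l₂ : ℤ) + l₃ - l₁ - z ≥ 0 ∧
          (l₃ : ℤ) + m₃ - z ≥ 0 ∧ (l₁ : ℤ) - l₂ - m₃ + z ≥ 0 then
        (-1 : ℝ) ^ z * ((zfact ((l₂ : ℤ) + l₃ + m₁ - z) * zfact ((l₁ : ℤ) - m₁ + z) : ℕ) : ℝ) /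
          ((Nat.factorial z * zfact ((l₂ : ℤ) + l₃ - l₁ - z) * zfact ((l₃ : ℤ) + m₃ - z) *
            zfact ((l₁ : ℤ) - l₂ - m₃ + z) : ℕ) : ℝ)
      else 0
  else 0

/-- Index set for the independent real Gaussian coordinates of the random spherical harmonic
coefficients: a triple `(l, m, b)` with `1 ≤ l`, `0 ≤ m ≤ l`, where `b` distinguishes real and
imaginary parts (only the real part is used when `m = 0`). -/
def GaussIx : Type := {q : ℕ × ℕ × Bool // 1 ≤ q.1 ∧ q.2.1 ≤ q.1 ∧ (q.2.1 = 0 → q.2.2 = false)}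

/-- The real Gaussian coordinate associated to an index. -/
def coordFn {Ω : Type*} (a : ℕ → ℤ → Ω → ℂ) (i : GaussIx) (ω : Ω) : ℝ :=
  if i.1.2.2 then (a i.1.1 (i.1.2.1 : ℤ) ω).im else (a i.1.1 (i.1.2.1 : ℤ) ω).re

/-- The variance of the Gaussian coordinate associated to an index:
`C l` for `a_{l0}`, and `C l / 2` for real and imaginary parts when `m ≠ 0`. -/
def coordVar (C : ℕ → ℝ) (i : GaussIx) : NNReal :=
  if i.1.2.1 = 0 then (C i.1.1).toNNReal else (C i.1.1 / 2).toNNReal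

/-- The Gaussian isotropic model for the random spherical harmonic coefficients `a_{lm}`,
with angular power spectrum `C`. -/
structure CMBModel {Ω : Type*} [MeasurableSpace Ω] (μ : Measure Ω) (C : ℕ → ℝ)
    (a : ℕ → ℤ → Ω → ℂ) : Prop where
  cPos : ∀ l, 1 ≤ l → 0 < C l
  aZeroReal : ∀ l, 1 ≤ l → ∀ ω, (a l 0 ω).im = 0
  aConj : ∀ l, 1 ≤ l → ∀ m : ℕ, 1 ≤ m → m ≤ l → ∀ ω,
    a l (-(m : ℤ)) ω = (-1 : ℂ) ^ m * (starRingEnd ℂ) (a l (m : ℤ) ω)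
  indep : iIndepFun (coordFn a) μ
  gauss : ∀ i : GaussIx, Measure.map (coordFn a i) μ = gaussianReal 0 (coordVar C i)

/-- The sample angle-averaged bispectrum. -/
def Bhat {Ω : Type*} (a : ℕ → ℤ → Ω → ℂ) (l₁ l₂ l₃ : ℕ) (ω : Ω) : ℂ :=
  ∑ m₁ ∈ mrange l₁, ∑ m₂ ∈ mrange l₂, ∑ m₃ ∈ mrange l₃,
    ((w3j l₁ l₂ l₃ m₁ m₂ m₃ : ℝ) : ℂ) * a l₁ m₁ ω * a l₂ m₂ ω * a l₃ m₃ ω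

/-- The normalized bispectrum (known angular power spectrum). -/
def Ibis {Ω : Type*} (C : ℕ → ℝ) (a : ℕ → ℤ → Ω → ℂ) (l₁ l₂ l₃ : ℕ) (ω : Ω) : ℝ :=
  (-1 : ℝ) ^ ((l₁ + l₂ + l₃) / 2) * (Bhat a l₁ l₂ l₃ ω).re /
    Real.sqrt (C l₁ * C l₂ * C l₃)

/-- The sample estimator of the angular power spectrum. -/
def Chat {Ω : Type*} (a : ℕ → ℤ → Ω → ℂ) (l : ℕ) (ω : Ω) : ℝ :=
  (2 * (l : ℝ) + 1)⁻¹ * ∑ m ∈ mrange l, Complex.normSq (a l m ω)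

/-- The feasible normalized bispectrum (estimated angular power spectrum). -/
def Ihat {Ω : Type*} (a : ℕ → ℤ → Ω → ℂ) (l₁ l₂ l₃ : ℕ) (ω : Ω) : ℝ :=
  (-1 : ℝ) ^ ((l₁ + l₂ + l₃) / 2) * (Bhat a l₁ l₂ l₃ ω).re /
    Real.sqrt (Chat a l₁ ω * Chat a l₂ ω * Chat a l₃ ω)

/-- The combinatorial factor `Δ_{l₁l₂l₃}` (for `l₁ ≤ l₂ ≤ l₃`). -/
def Delta (l₁ l₂ l₃ : ℕ) : ℝ :=
  if l₁ < l₂ ∧ l₂ < l₃ then 1 else if l₁ = l₂ ∧ l₂ = l₃ then 6 else 2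
/-- The correction factor `g(l;p) = ∏_{k=1}^p (2l+1)/(2l+2k-1)`. -/
def gfun (l p : ℕ) : ℝ := ∏ k ∈ Finset.Icc 1 p, (2 * (l : ℝ) + 1) / (2 * l + 2 * k - 1)

/-- The multiset `{l₁, l₂, l₃}` of the components of a triple. -/
def tripleMultiset (l : ℕ × ℕ × ℕ) : Multiset ℕ := {l.1, l.2.1, l.2.2}

/-- The correction factor `G[(l_{11},l_{12},l_{13}),…,(l_{I1},l_{I2},l_{I3}); p₁,…,p_I]`:
repeat each triple `2pᵢ` times, and take `∏_u g(ℓ̄_u ; #(u)/2)` over the distinct values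
`ℓ̄_u`, where `#(u)` is the multiplicity of `ℓ̄_u`. -/
def Gfactor {I : ℕ} (l : Fin I → ℕ × ℕ × ℕ) (p : Fin I → ℕ) : ℝ :=
  let M : Multiset ℕ := ∑ i : Fin I, (2 * p i) • tripleMultiset (l i)
  ∏ u ∈ M.toFinset, gfun u (M.count u / 2)

open Filter Topology Set in
lemma lint_ftc {g g' : ℝ → ℝ} {a L : ℝ} (hd : ∀ x ∈ Ici a, HasDerivAt g (g' x) x)
    (hp : ∀ x ∈ Ioi a, 0 ≤ g' x) (hg : Tendsto g atTop (𝓝 L)) :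
    ∫⁻ x in Ioi a, ENNReal.ofReal (g' x) = ENNReal.ofReal (L - g a) := by
  rw [← integral_Ioi_of_hasDerivAt_of_nonneg' hd hp hg,
    ofReal_integral_eq_lintegral_ofReal (integrableOn_Ioi_deriv_of_nonneg' hd hp hg)]
  exact (ae_restrict_iff' measurableSet_Ioi).2 (Filter.Eventually.of_forall hp)

lemma lint_exp (R : ℝ) (hR : 0 < R) :
    ∫⁻ s in Set.Ioi (1:ℝ), ENNReal.ofReal (R * s * Real.exp (-(s^2 * R / 2))) =
      ENNReal.ofReal (Real.exp (-(R/2))) := by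
  have := lint_ftc (a := 1) (L := 0) (g := fun s => - Real.exp (-(s^2 * R / 2)))
    (g' := fun s => R * s * Real.exp (-(s^2 * R / 2))) ?_ ?_ ?_
  · rw [this]; norm_num
  · intro x _
    have h1 : HasDerivAt (fun s : ℝ => -(s^2 * R / 2)) (-(2 * x * R / 2)) x := by
      have := (((hasDerivAt_pow 2 x).mul_const R).div_const 2).fun_neg
      exact this.congr_deriv (by norm_num)
    exact h1.exp.fun_neg.congr_deriv (by ring)
  · intro x hx
    have : (0:ℝ) < x := lt_trans one_pos hx
    positivity
  · rw [← neg_zero]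
    apply Filter.Tendsto.neg
    apply Real.tendsto_exp_atBot.comp
    apply Filter.tendsto_neg_atTop_atBot.comp
    apply Filter.Tendsto.atTop_div_const two_pos
    exact (Filter.tendsto_pow_atTop two_ne_zero).atTop_mul_const hR

lemma lint_pow (n : ℕ) (hn : 0 < n) :
    ∫⁻ s in Set.Ioi (1:ℝ), ENNReal.ofReal ((s ^ (n+1))⁻¹) = ENNReal.ofReal ((n:ℝ)⁻¹) := by
  have hn' : (n:ℝ) ≠ 0 := by positivity
  have := lint_ftc (a := 1) (L := 0) (g := fun s => - ((s^n)⁻¹ * (n:ℝ)⁻¹))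
    (g' := fun s => (s ^ (n+1))⁻¹) ?_ ?_ ?_
  · rw [this]; norm_num
  · intro x hx
    have : (0:ℝ) < x := lt_of_lt_of_le one_pos hx
    have h1 := (((hasDerivAt_pow n x).fun_inv (by positivity)).mul_const ((n:ℝ)⁻¹)).fun_neg
    refine h1.congr_deriv ?_
    obtain ⟨k, rfl⟩ : ∃ k, n = k + 1 := ⟨n-1, by omega⟩
    simp only [Nat.add_sub_cancel]
    field_simp
    ring
  · intro x hx
    have : (0:ℝ) < x := lt_trans one_pos hx
    positivity
  · have : Filter.Tendsto (fun s : ℝ => - ((s^n)⁻¹ * (n:ℝ)⁻¹)) Filter.atTop (nhds (-(0 * (n:ℝ)⁻¹))) :=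
      (((Filter.tendsto_pow_atTop hn.ne').inv_tendsto_atTop).mul_const _).neg
    simpa using this

/-- radial one-step recursion -/
lemma core {E : Type*} [MeasurableSpace E] (ν : Measure E) [SFinite ν] (D : ℝ → E → E) (d : ℕ)
    (hd : 0 < d)
    (hD : ∀ s, 0 < s → ∀ f : E → ENNReal, Measurable f →
      ∫⁻ x, f (D s x) ∂ν = ENNReal.ofReal ((s^d)⁻¹) * ∫⁻ x, f x ∂ν)
    (G : E → ENNReal) (hG : Measurable G) (hGs : ∀ s, 0 < s → ∀ x, G (D s x) = G x)
    (R : E → ℝ) (hR : Measurable R) (hRs : ∀ s, 0 < s → ∀ x, R (D s x) = s^2 * R x)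
    (hpos : ∀ᵐ x ∂ν, 0 < R x) (k : ℕ) :
    ∫⁻ x, G x * ENNReal.ofReal (R x ^ (k+1) * Real.exp (-(R x / 2))) ∂ν =
      ENNReal.ofReal (d + 2 * k) *
      ∫⁻ x, G x * ENNReal.ofReal (R x ^ k * Real.exp (-(R x / 2))) ∂ν := by
  set f : E → ENNReal := fun x => G x * ENNReal.ofReal (R x ^ (k+1) * Real.exp (-(R x / 2))) with hf
  have hfm : Measurable f := by fun_prop
  have hn : 0 < d + 2 * k := by omega
  have e1 : ∀ᵐ x ∂ν, G x * ENNReal.ofReal (R x ^ k * Real.exp (-(R x / 2))) =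
      ∫⁻ s in Set.Ioi (1:ℝ), ENNReal.ofReal ((s ^ (2*k+1))⁻¹) * f (D s x) := by
    filter_upwards [hpos] with x hx
    rw [ENNReal.ofReal_mul (by positivity), ← lint_exp _ hx, ← mul_assoc,
      ← lintegral_const_mul _ (by fun_prop)]
    apply setLIntegral_congr_fun measurableSet_Ioi
    intro s hs
    have hs0 : (0:ℝ) < s := lt_trans one_pos hs
    simp only [hf]
    rw [hGs s hs0, hRs s hs0, mul_left_comm, mul_assoc, ← ENNReal.ofReal_mul (by positivity),
      ← ENNReal.ofReal_mul (by positivity)]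
    congr 2
    field_simp
    ring
  have hm : Measurable (Function.uncurry fun (x : E) (s : ℝ) => 
      ENNReal.ofReal ((s ^ (2*k+1))⁻¹) * 
        (G x * ENNReal.ofReal ((s^2 * R x) ^ (k+1) * Real.exp (-((s^2 * R x) / 2))))) := by
    unfold Function.uncurry; fun_prop
  have e2 : ∫⁻ x, G x * ENNReal.ofReal (R x ^ k * Real.exp (-(R x / 2))) ∂ν =
      ENNReal.ofReal (((d + 2 * k : ℕ) : ℝ)⁻¹) * ∫⁻ x, f x ∂ν := by
    rw [lintegral_congr_ae e1]
    calc _ = ∫⁻ x, (∫⁻ s in Set.Ioi (1:ℝ), ENNReal.ofReal ((s ^ (2*k+1))⁻¹) * 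
        (G x * ENNReal.ofReal ((s^2 * R x) ^ (k+1) * Real.exp (-((s^2 * R x) / 2))))) ∂ν := by
          apply lintegral_congr; intro x
          apply setLIntegral_congr_fun measurableSet_Ioi
          intro s hs
          have hs0 : (0:ℝ) < s := lt_trans one_pos hs
          simp only [hf]
          rw [hGs s hs0, hRs s hs0]
      _ = ∫⁻ s in Set.Ioi (1:ℝ), ∫⁻ x, ENNReal.ofReal ((s ^ (2*k+1))⁻¹) * 
        (G x * ENNReal.ofReal ((s^2 * R x) ^ (k+1) * Real.exp (-((s^2 * R x) / 2)))) ∂ν := 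
          lintegral_lintegral_swap hm.aemeasurable
      _ = ∫⁻ s in Set.Ioi (1:ℝ), ENNReal.ofReal ((s ^ (d+2*k+1))⁻¹) * ∫⁻ x, f x ∂ν := by
          apply setLIntegral_congr_fun measurableSet_Ioi
          intro s hs
          have hs0 : (0:ℝ) < s := lt_trans one_pos hs
          have := hD s hs0 f hfm
          simp only [hf, hGs s hs0, hRs s hs0] at this
          beta_reduce
          rw [lintegral_const_mul _ (by fun_prop), this, ← mul_assoc,
            ← ENNReal.ofReal_mul (by positivity)]
          congr 2
          rw [← mul_inv, ← pow_add]; congr 2; ring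
      _ = _ := by
          rw [lintegral_mul_const _ (by fun_prop), lint_pow _ hn]
  rw [e2, ← mul_assoc, ← ENNReal.ofReal_mul (by positivity)]
  push_cast
  rw [mul_inv_cancel₀ (by exact_mod_cast hn.ne'), ENNReal.ofReal_one, one_mul]

lemma pi_gauss {J : Type*} [Fintype J] (v : J → NNReal) (hv : ∀ j, v j ≠ 0) :
    Measure.pi (fun j => gaussianReal 0 (v j)) =
      (volume : Measure (J → ℝ)).withDensity (fun x => ∏ j, gaussianPDF 0 (v j) (x j)) := by
  refine Measure.pi_eq fun s hs => ?_
  rw [withDensity_apply _ (MeasurableSet.univ_pi hs), volume_pi, Measure.restrict_pi_pi]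
  simp only [gaussianPDF]
  simp_rw [← ENNReal.ofReal_prod_of_nonneg (fun j _ => gaussianPDFReal_nonneg 0 (v j) _)]
  rw [← ofReal_integral_eq_lintegral_ofReal]
  · rw [integral_fintype_prod_eq_prod (𝕜 := ℝ) (fun j x => gaussianPDFReal 0 (v j) x),
      ENNReal.ofReal_prod_of_nonneg]
    · refine Finset.prod_congr rfl fun j _ => ?_
      rw [gaussianReal_apply_eq_integral _ (hv j)]
    · intro j _
      exact integral_nonneg fun x => gaussianPDFReal_nonneg 0 (v j) _
  · exact Integrable.fintype_prod (fun j => (integrable_gaussianPDFReal 0 (v j)).restrict)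
  · exact Filter.Eventually.of_forall fun x => 
      Finset.prod_nonneg fun j _ => gaussianPDFReal_nonneg 0 (v j) _

lemma diag_lint {J : Type*} [Fintype J] [DecidableEq J] (c : J → ℝ) (hc : ∀ j, 0 < c j) 
    (f : (J → ℝ) → ENNReal) (hf : Measurable f) :
    ∫⁻ x : J → ℝ, f (fun j => c j * x j) = ENNReal.ofReal ((∏ j, c j)⁻¹) * ∫⁻ x, f x := by
  have hp : 0 < ∏ j, c j := Finset.prod_pos fun j _ => hc j
  have h := Real.smul_map_diagonal_volume_pi (D := c) (by rw [Matrix.det_diagonal]; exact hp.ne')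
  rw [Matrix.det_diagonal, abs_of_pos hp] at h
  conv_rhs => rw [← h]
  rw [lintegral_smul_measure, lintegral_map hf
    (Continuous.measurable (LinearMap.continuous_on_pi _)), smul_eq_mul, ← mul_assoc,
    ← ENNReal.ofReal_mul (by positivity), inv_mul_cancel₀ hp.ne', ENNReal.ofReal_one, one_mul]
  refine lintegral_congr fun x => ?_
  congr 1; ext j
  simp [Matrix.toLin'_apply, Matrix.mulVec_diagonal]

/-- finite coordinate index set -/
abbrev JJ (S : Finset ℕ) : Type := ↥(S.sigma mrange)

def yext (S : Finset ℕ) (x : JJ S → ℝ) (l : ℕ) (m : ℤ) : ℝ :=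
  if h : (⟨l, m⟩ : Σ _ : ℕ, ℤ) ∈ S.sigma mrange then x ⟨_, h⟩ else 0

def acf (S : Finset ℕ) (l : ℕ) (m : ℤ) (x : JJ S → ℝ) : ℂ :=
  if m = 0 then ((yext S x l 0 : ℝ) : ℂ) else
  if 0 < m then ((yext S x l m : ℝ) : ℂ) + ((yext S x l (-m) : ℝ) : ℂ) * Complex.I else
  (-1 : ℂ) ^ m.natAbs * (((yext S x l (-m) : ℝ) : ℂ) - ((yext S x l m : ℝ) : ℂ) * Complex.I)

def toIx (S : Finset ℕ) (hS : ∀ u ∈ S, 1 ≤ u) (j : JJ S) : GaussIx :=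
  ⟨(j.1.1, j.1.2.natAbs, decide (j.1.2 < 0)), by
    obtain ⟨⟨l, m⟩, h⟩ := j
    simp only [Finset.mem_sigma, mrange, Finset.mem_Icc] at h
    refine ⟨hS l h.1, ?_, ?_⟩
    · show m.natAbs ≤ l
      omega
    · intro h0
      have : m = 0 := by simpa using h0
      simp [this]⟩

lemma toIx_inj (S : Finset ℕ) (hS : ∀ u ∈ S, 1 ≤ u) : Function.Injective (toIx S hS) := by
  rintro ⟨⟨l, m⟩, h⟩ ⟨⟨l', m'⟩, h'⟩ e
  have e' := congrArg Subtype.val e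
  simp only [toIx, Prod.mk.injEq, decide_eq_decide] at e'
  obtain ⟨e1, e2, e3⟩ := e'
  have : m = m' := by omega
  subst e1; subst this; rfl

lemma yext_coe (S : Finset ℕ) (x : JJ S → ℝ) (j : JJ S) : yext S x j.1.1 j.1.2 = x j := by
  unfold yext; rw [dif_pos j.2]

lemma yext_of {S : Finset ℕ} (x : JJ S → ℝ) {l : ℕ} {m : ℤ}
    (h : (⟨l, m⟩ : Σ _ : ℕ, ℤ) ∈ S.sigma mrange) : yext S x l m = x ⟨_, h⟩ := by
  unfold yext; rw [dif_pos h]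

lemma acf_eq {Ω : Type} [MeasurableSpace Ω] {μ : Measure Ω} {C : ℕ → ℝ} {a : ℕ → ℤ → Ω → ℂ}
    (hmod : CMBModel μ C a) (S : Finset ℕ) (hS : ∀ u ∈ S, 1 ≤ u) (l : ℕ) (hl : l ∈ S)
    (m : ℤ) (hm : m ∈ mrange l) (ω : Ω) :
    acf S l m (fun j => coordFn a (toIx S hS j) ω) = a l m ω := by
  have hmem : ∀ m : ℤ, m ∈ mrange l → (⟨l, m⟩ : Σ _ : ℕ, ℤ) ∈ S.sigma mrange := fun m h =>
    Finset.mem_sigma.2 ⟨hl, h⟩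
  have hneg : -m ∈ mrange l := by
    simp only [mrange, Finset.mem_Icc] at *; omega
  have h0 : (0:ℤ) ∈ mrange l := by
    simp only [mrange, Finset.mem_Icc] at *; omega
  have hm' := hm
  simp only [mrange, Finset.mem_Icc] at hm'
  unfold acf
  rw [yext_of _ (hmem m hm), yext_of _ (hmem _ hneg), yext_of _ (hmem 0 h0)]
  split_ifs with h1 h2
  · subst h1
    apply Complex.ext
    · simp [coordFn, toIx]
    · simp [hmod.aZeroReal l (hS l hl) ω]
  · have hn : (m.natAbs : ℤ) = m := by omega
    apply Complex.ext <;>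
    simp [coordFn, toIx, h2, not_lt.2 h2.le]
    all_goals rw [abs_of_pos h2]
  · have hlt : m < 0 := by omega
    have hk : m = -(m.natAbs : ℤ) := by omega
    have := hmod.aConj l (hS l hl) m.natAbs (by omega) (by omega) ω
    rw [← hk] at this
    rw [this]
    congr 1
    apply Complex.ext <;>
    simp [coordFn, toIx, hlt, not_lt.2 hlt.le]

def Dsc (S : Finset ℕ) (u : ℕ) (s : ℝ) (x : JJ S → ℝ) : JJ S → ℝ :=
  fun j => (if j.1.1 = u then s else 1) * x j

lemma yext_D (S : Finset ℕ) (u : ℕ) (s : ℝ) (x : JJ S → ℝ) (l : ℕ) (m : ℤ) :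
    yext S (Dsc S u s x) l m = (if l = u then s else 1) * yext S x l m := by
  unfold yext Dsc
  split_ifs <;> simp

lemma acf_D (S : Finset ℕ) (u : ℕ) (s : ℝ) (x : JJ S → ℝ) (l : ℕ) (m : ℤ) :
    acf S l m (Dsc S u s x) = ((if l = u then s else 1 : ℝ) : ℂ) * acf S l m x := by
  unfold acf
  simp only [yext_D]
  generalize (if l = u then s else 1 : ℝ) = c
  push_cast
  split_ifs <;> ring

@[fun_prop]
lemma yext_meas (S : Finset ℕ) (l : ℕ) (m : ℤ) : Measurable (fun x => yext S x l m) := by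
  unfold yext
  split_ifs with h
  · exact measurable_pi_apply _
  · exact measurable_const

@[fun_prop]
lemma acf_meas (S : Finset ℕ) (l : ℕ) (m : ℤ) : Measurable (fun x => acf S l m x) := by
  unfold acf
  split_ifs <;> fun_prop

lemma Bhat_D (S : Finset ℕ) (u : ℕ) (s : ℝ) (x : JJ S → ℝ) (l₁ l₂ l₃ : ℕ) :
    Bhat (acf S) l₁ l₂ l₃ (Dsc S u s x) =
      (((if l₁ = u then s else 1) * (if l₂ = u then s else 1) * (if l₃ = u then s else 1) : ℝ) : ℂ) *
        Bhat (acf S) l₁ l₂ l₃ x := by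
  unfold Bhat
  simp only [acf_D, Finset.mul_sum]
  refine Finset.sum_congr rfl fun _ _ => Finset.sum_congr rfl fun _ _ =>
    Finset.sum_congr rfl fun _ _ => ?_
  rw [Complex.ofReal_mul, Complex.ofReal_mul]
  ring

lemma Chat_D (S : Finset ℕ) (u : ℕ) (s : ℝ) (x : JJ S → ℝ) (l : ℕ) :
    Chat (acf S) l (Dsc S u s x) = (if l = u then s else 1) ^ 2 * Chat (acf S) l x := by
  unfold Chat
  simp only [acf_D, Finset.mul_sum, Complex.normSq_mul, Complex.normSq_ofReal]
  refine Finset.sum_congr rfl fun _ _ => ?_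
  ring

lemma Chat_nonneg {Ω : Type*} (a : ℕ → ℤ → Ω → ℂ) (l : ℕ) (ω : Ω) : 0 ≤ Chat a l ω := by
  unfold Chat
  have := Finset.sum_nonneg (s := mrange l) (fun m _ => Complex.normSq_nonneg (a l m ω))
  positivity

lemma Ihat_D (S : Finset ℕ) (u : ℕ) (s : ℝ) (hs : 0 < s) (x : JJ S → ℝ) (l₁ l₂ l₃ : ℕ) :
    Ihat (acf S) l₁ l₂ l₃ (Dsc S u s x) = Ihat (acf S) l₁ l₂ l₃ x := by
  unfold Ihat
  rw [Bhat_D, Chat_D, Chat_D, Chat_D, Complex.re_ofReal_mul]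
  have hc : ∀ l : ℕ, 0 < (if l = u then s else 1 : ℝ) := fun l => by split_ifs <;> positivity
  have h1 := hc l₁
  have h2 := hc l₂
  have h3 := hc l₃
  generalize (if l₁ = u then s else 1 : ℝ) = c1 at *
  generalize (if l₂ = u then s else 1 : ℝ) = c2 at *
  generalize (if l₃ = u then s else 1 : ℝ) = c3 at *
  rw [show c1 ^ 2 * Chat (acf S) l₁ x * (c2 ^ 2 * Chat (acf S) l₂ x) *
    (c3 ^ 2 * Chat (acf S) l₃ x) = (c1 * c2 * c3) ^ 2 *
      (Chat (acf S) l₁ x * Chat (acf S) l₂ x * Chat (acf S) l₃ x) by ring,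
    Real.sqrt_mul (by positivity), Real.sqrt_sq (by positivity), mul_left_comm]
  rw [mul_div_mul_left _ _ (by positivity)]

@[fun_prop]
lemma Chat_meas (S : Finset ℕ) (l : ℕ) : Measurable (fun x => Chat (acf S) l x) := by
  unfold Chat
  have : Measurable Complex.normSq := Complex.continuous_normSq.measurable
  fun_prop

@[fun_prop]
lemma Bhat_meas (S : Finset ℕ) (l₁ l₂ l₃ : ℕ) : Measurable (fun x => Bhat (acf S) l₁ l₂ l₃ x) := by
  unfold Bhat
  fun_prop

@[fun_prop]
lemma Ihat_meas (S : Finset ℕ) (l₁ l₂ l₃ : ℕ) : Measurable (fun x => Ihat (acf S) l₁ l₂ l₃ x) := by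
  unfold Ihat
  fun_prop

@[fun_prop]
lemma Ibis_meas (S : Finset ℕ) (C : ℕ → ℝ) (l₁ l₂ l₃ : ℕ) :
    Measurable (fun x => Ibis C (acf S) l₁ l₂ l₃ x) := by
  unfold Ibis
  fun_prop

/-- normalised square radius -/
def Rr (S : Finset ℕ) (C : ℕ → ℝ) (u : ℕ) (x : JJ S → ℝ) : ℝ :=
  (2 * (u : ℝ) + 1) * Chat (acf S) u x / C u

lemma Chat_eq (S : Finset ℕ) (u : ℕ) (x : JJ S → ℝ) :
    (2 * (u : ℝ) + 1) * Chat (acf S) u x =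
      ∑ m ∈ mrange u, (if m = 0 then 1 else 2) * yext S x u m ^ 2 := by
  unfold Chat
  rw [← mul_assoc, mul_inv_cancel₀ (by positivity), one_mul]
  have h1 : ∀ m : ℤ, Complex.normSq (acf S u m x) =
      (if m = 0 then 1/2 else 1) * yext S x u m ^ 2 +
      (if -m = 0 then 1/2 else 1) * yext S x u (-m) ^ 2 := by
    intro m
    unfold acf
    split_ifs with h h' h''
    · subst h; simp [Complex.normSq_apply]; ring
    · omega
    · omega
    · simp [Complex.normSq_apply]; ring
    · omega
    · rw [map_mul, map_pow]; simp [Complex.normSq_apply]; ring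
  rw [Finset.sum_congr rfl fun m _ => h1 m, Finset.sum_add_distrib]
  have h2 : ∑ m ∈ mrange u, (if -m = 0 then 1/2 else 1 : ℝ) * yext S x u (-m) ^ 2 =
      ∑ m ∈ mrange u, (if m = 0 then 1/2 else 1) * yext S x u m ^ 2 := by
    refine Finset.sum_nbij' (fun m => -m) (fun m => -m) ?_ ?_ ?_ ?_ ?_
    · intro m hm; simp only [mrange, Finset.mem_Icc] at *; omega
    · intro m hm; simp only [mrange, Finset.mem_Icc] at *; omega
    · intro m _; simp
    · intro m _; simp
    · intro m _; rfl
  rw [h2, ← Finset.sum_add_distrib]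
  refine Finset.sum_congr rfl fun m _ => ?_
  split_ifs <;> ring

lemma density_eq (S : Finset ℕ) (hS : ∀ u ∈ S, 1 ≤ u) (C : ℕ → ℝ) (hC : ∀ u ∈ S, 0 < C u) :
    ∃ κ : ENNReal, ∀ x : JJ S → ℝ,
      ∏ j, gaussianPDF 0 (coordVar C (toIx S hS j)) (x j) =
        κ * ENNReal.ofReal (Real.exp (-((∑ u ∈ S, Rr S C u x) / 2))) := by
  refine ⟨ENNReal.ofReal (∏ j : JJ S,
    (Real.sqrt (2 * Real.pi * (coordVar C (toIx S hS j) : ℝ)))⁻¹), fun x => ?_⟩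
  simp only [gaussianPDF]
  rw [← ENNReal.ofReal_prod_of_nonneg (fun j _ => gaussianPDFReal_nonneg 0 _ _),
    ← ENNReal.ofReal_mul (Finset.prod_nonneg fun j _ => by positivity)]
  congr 1
  simp only [gaussianPDFReal]
  rw [Finset.prod_mul_distrib, ← Real.exp_sum]
  congr 2
  rw [Finset.sum_div, ← Finset.sum_neg_distrib]
  have : ∀ j : JJ S, -(x j - 0) ^ 2 / (2 * (coordVar C (toIx S hS j) : ℝ)) =
      (fun q : (Σ _ : ℕ, ℤ) => -((if q.2 = 0 then 1 else 2) * yext S x q.1 q.2 ^ 2 / C q.1 / 2)) j.1 := by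
    intro j
    have hj := hC j.1.1 (Finset.mem_sigma.1 j.2).1
    simp only [yext_coe, coordVar, toIx, Int.natAbs_eq_zero]
    split_ifs
    · rw [Real.coe_toNNReal _ hj.le]; field_simp; ring
    · rw [Real.coe_toNNReal _ (by positivity)]; field_simp; ring
  rw [Finset.sum_congr rfl fun j _ => this j, Finset.sum_coe_sort (S.sigma mrange)
    (fun q : (Σ _ : ℕ, ℤ) => -((if q.2 = 0 then 1 else 2) * yext S x q.1 q.2 ^ 2 / C q.1 / 2)),
    Finset.sum_sigma]
  refine Finset.sum_congr rfl fun u _ => ?_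
  simp only [Rr, Chat_eq, Finset.sum_div, Finset.sum_neg_distrib]

lemma Rr_pos (S : Finset ℕ) (C : ℕ → ℝ) (u : ℕ) (hu : u ∈ S) (hC : 0 < C u) :
    ∀ᵐ x : JJ S → ℝ, 0 < Rr S C u x := by
  have h0 : (⟨u, 0⟩ : Σ _ : ℕ, ℤ) ∈ S.sigma mrange :=
    Finset.mem_sigma.2 ⟨hu, by simp [mrange]⟩
  have : ∀ᵐ x : JJ S → ℝ, x ⟨_, h0⟩ ≠ 0 := by
    have := Measure.pi_hyperplane (fun _ : JJ S => (volume : Measure ℝ)) ⟨_, h0⟩ 0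
    rw [ae_iff, volume_pi]
    simpa using this
  filter_upwards [this] with x hx
  unfold Rr
  rw [Chat_eq]
  refine div_pos (Finset.sum_pos' (fun m _ => by split_ifs <;> positivity) ⟨0, by simp [mrange], ?_⟩) hC
  rw [yext_of x h0]
  have := sq_pos_of_ne_zero hx
  simpa using this

lemma Rr_D (S : Finset ℕ) (C : ℕ → ℝ) (u v : ℕ) (s : ℝ) (x : JJ S → ℝ) :
    Rr S C v (Dsc S u s x) = (if v = u then s else 1) ^ 2 * Rr S C v x := by
  unfold Rr
  rw [Chat_D]; ring

lemma Dsc_lint (S : Finset ℕ) (u : ℕ) (hu : u ∈ S) (s : ℝ) (hs : 0 < s) (f : (JJ S → ℝ) → ENNReal)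
    (hf : Measurable f) :
    ∫⁻ x, f (Dsc S u s x) = ENNReal.ofReal ((s ^ (2 * u + 1))⁻¹) * ∫⁻ x, f x := by
  have := diag_lint (fun j : JJ S => if j.1.1 = u then s else 1)
    (fun j => by split_ifs <;> positivity) f hf
  have h2 : (∏ j : JJ S, if j.1.1 = u then s else 1) = s ^ (2 * u + 1) := by
    rw [Finset.prod_coe_sort (S.sigma mrange) (fun q => if q.1 = u then s else 1), Finset.prod_sigma]
    rw [Finset.prod_eq_single u]
    · simp only [if_true, Finset.prod_const, mrange, Int.card_Icc]
      congr 1; omega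
    · intro b _ hb
      simp [hb]
    · intro h; exact absurd hu h
  rw [h2] at this
  exact this

@[fun_prop]
lemma Rr_meas (S : Finset ℕ) (C : ℕ → ℝ) (u : ℕ) : Measurable (fun x => Rr S C u x) := by
  unfold Rr
  fun_prop

def rho (S : Finset ℕ) (C : ℕ → ℝ) (x : JJ S → ℝ) : ENNReal :=
  ENNReal.ofReal (Real.exp (-((∑ u ∈ S, Rr S C u x) / 2)))

@[fun_prop]
lemma rho_meas (S : Finset ℕ) (C : ℕ → ℝ) : Measurable (fun x => rho S C x) := by
  unfold rho
  fun_prop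

lemma gfun_nonneg (u k : ℕ) : 0 ≤ gfun u k := by
  unfold gfun
  refine Finset.prod_nonneg fun j hj => ?_
  have : 1 ≤ j := (Finset.mem_Icc.1 hj).1
  have : (1:ℝ) ≤ j := by exact_mod_cast this
  refine div_nonneg (by positivity) ?_
  have : (0:ℝ) ≤ u := by positivity
  linarith

lemma gfun_succ (u k : ℕ) :
    gfun u (k+1) = gfun u k * ((2 * (u : ℝ) + 1) / (2 * u + 1 + 2 * k)) := by
  unfold gfun
  rw [Finset.prod_Icc_succ_top (by omega)]
  congr 2
  push_cast; ring

lemma one_block (S : Finset ℕ) (C : ℕ → ℝ) (u : ℕ) (hu : u ∈ S) (hC : 0 < C u)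
    (H : (JJ S → ℝ) → ENNReal) (hH : Measurable H)
    (hHs : ∀ s, 0 < s → ∀ x, H (Dsc S u s x) = H x) (k : ℕ) :
    (∫⁻ x, H x * ENNReal.ofReal ((Chat (acf S) u x / C u) ^ k) * rho S C x) *
      ENNReal.ofReal (gfun u k) = ∫⁻ x, H x * rho S C x := by
  set G : (JJ S → ℝ) → ENNReal := fun x => H x *
    ENNReal.ofReal (Real.exp (-((∑ v ∈ S.erase u, Rr S C v x) / 2))) with hGdef
  have hG : Measurable G := by fun_prop
  have hGs : ∀ s, 0 < s → ∀ x, G (Dsc S u s x) = G x := by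
    intro s hs x
    simp only [hGdef, hHs s hs]
    congr 5
    refine Finset.sum_congr rfl fun v hv => ?_
    rw [Rr_D, if_neg (Finset.ne_of_mem_erase hv)]; ring
  have hnn : ∀ x, 0 ≤ Rr S C u x := fun x => by
    unfold Rr
    have := Chat_nonneg (acf S) u x
    positivity
  have hexp : ∀ x (c : ℝ), 0 ≤ c → H x * ENNReal.ofReal c * rho S C x =
      G x * ENNReal.ofReal (c * Real.exp (-(Rr S C u x / 2))) := by
    intro x c hc
    simp only [hGdef, rho]
    rw [mul_assoc, mul_assoc, ← ENNReal.ofReal_mul hc, ← ENNReal.ofReal_mul (by positivity),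
      ← Finset.add_sum_erase _ _ hu, mul_left_comm, ← Real.exp_add]
    congr 4
    ring
  have hcore := core (volume : Measure (JJ S → ℝ)) (Dsc S u) (2 * u + 1) (by omega)
    (fun s hs f hf => Dsc_lint S u hu s hs f hf) G hG hGs (Rr S C u) (Rr_meas S C u)
    (fun s hs x => by rw [Rr_D, if_pos rfl]) (Rr_pos S C u hu hC)
  have hrat : ∀ x, Chat (acf S) u x / C u = Rr S C u x * (2 * (u:ℝ) + 1)⁻¹ := by
    intro x; unfold Rr; field_simp
  have hform : ∀ k, (∫⁻ x, H x * ENNReal.ofReal ((Chat (acf S) u x / C u) ^ k) * rho S C x) =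
      ENNReal.ofReal (((2 * (u:ℝ) + 1)⁻¹) ^ k) *
        ∫⁻ x, G x * ENNReal.ofReal (Rr S C u x ^ k * Real.exp (-(Rr S C u x / 2))) := by
    intro k
    rw [← lintegral_const_mul _ (by fun_prop)]
    refine lintegral_congr fun x => ?_
    have := hnn x
    rw [hrat, hexp _ _ (by positivity), mul_left_comm, ← ENNReal.ofReal_mul (by positivity)]
    congr 2
    ring
  have h0 := hform 0
  simp only [pow_zero, ENNReal.ofReal_one, mul_one, one_mul] at h0
  rw [h0]
  induction k with
  | zero => rw [hform]; simp [gfun]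
  | succ k ih =>
    rw [← ih, hform, hform, hcore, gfun_succ]
    rw [← mul_assoc, mul_right_comm, mul_right_comm _ _ (ENNReal.ofReal (gfun u k))]
    congr 1
    rw [← ENNReal.ofReal_mul (by positivity), ← ENNReal.ofReal_mul (by positivity),
      ← ENNReal.ofReal_mul (by positivity)]
    congr 1
    push_cast
    rw [pow_succ]
    field_simp

lemma all_blocks (S : Finset ℕ) (C : ℕ → ℝ) (hC : ∀ u ∈ S, 0 < C u)
    (H : (JJ S → ℝ) → ENNReal) (hH : Measurable H)
    (hHs : ∀ u, ∀ s, 0 < s → ∀ x, H (Dsc S u s x) = H x) (k : ℕ → ℕ) (S' : Finset ℕ) (hS' : S' ⊆ S) :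
    (∫⁻ x, H x * ENNReal.ofReal (∏ u ∈ S', (Chat (acf S) u x / C u) ^ k u) * rho S C x) *
      ENNReal.ofReal (∏ u ∈ S', gfun u (k u)) = ∫⁻ x, H x * rho S C x := by
  induction S' using Finset.induction_on with
  | empty => simp
  | insert u T hu ih =>
    have huS : u ∈ S := hS' (Finset.mem_insert_self _ _)
    have hT : T ⊆ S := fun v hv => hS' (Finset.mem_insert_of_mem hv)
    rw [← ih hT, ← one_block S C u huS (hC u huS)
      (fun x => H x * ENNReal.ofReal (∏ u ∈ T, (Chat (acf S) u x / C u) ^ k u)) (by fun_prop)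
      ?_ (k u), mul_assoc, ← ENNReal.ofReal_mul (gfun_nonneg _ _), Finset.prod_insert hu]
    · congr 1
      refine lintegral_congr fun x => ?_
      congr 1
      rw [Finset.prod_insert hu, mul_comm, mul_comm ((Chat (acf S) u x / C u) ^ k u),
        ENNReal.ofReal_mul, mul_comm, mul_assoc]
      refine Finset.prod_nonneg fun v hv => pow_nonneg (div_nonneg (Chat_nonneg _ _ _) (hC v (hT hv)).le) _
    · intro s hs x
      beta_reduce
      rw [hHs u s hs]
      congr 2
      refine Finset.prod_congr rfl fun v hv => ?_
      rw [Chat_D, if_neg (show v ≠ u from fun h => hu (h ▸ hv))]; simp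

lemma coord_aem {Ω : Type} [MeasurableSpace Ω] {μ : Measure Ω} {C : ℕ → ℝ} {a : ℕ → ℤ → Ω → ℂ}
    (hmod : CMBModel μ C a) (i : GaussIx) : AEMeasurable (coordFn a i) μ := by
  by_contra h
  have := hmod.gauss i
  rw [Measure.map_of_not_aemeasurable h] at this
  have h2 := congrArg (fun m : Measure ℝ => m Set.univ) this
  simp at h2

lemma law {Ω : Type} [MeasurableSpace Ω] {μ : Measure Ω} [IsProbabilityMeasure μ]
    {C : ℕ → ℝ} {a : ℕ → ℤ → Ω → ℂ}
    (hmod : CMBModel μ C a) (S : Finset ℕ) (hS : ∀ u ∈ S, 1 ≤ u) :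
    ∃ κ : ENNReal, ∀ f : (JJ S → ℝ) → ENNReal, Measurable f →
      ∫⁻ ω, f (fun j => coordFn a (toIx S hS j) ω) ∂μ = κ * ∫⁻ x, f x * rho S C x := by
  have hC : ∀ u ∈ S, 0 < C u := fun u hu => hmod.cPos u (hS u hu)
  obtain ⟨κ, hκ⟩ := density_eq S hS C hC
  refine ⟨κ, fun f hf => ?_⟩
  have hind := hmod.indep.precomp (toIx_inj S hS)
  have hm : ∀ j, AEMeasurable (coordFn a (toIx S hS j)) μ := fun j => coord_aem hmod _
  have hlaw := (iIndepFun_iff_map_fun_eq_pi_map hm).1 hind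
  simp only [hmod.gauss] at hlaw
  rw [pi_gauss _ ?_] at hlaw
  · rw [← lintegral_map' (f := f) hf.aemeasurable (aemeasurable_pi_lambda _ hm), hlaw,
      lintegral_withDensity_eq_lintegral_mul _ ?_ hf, ← lintegral_const_mul _ (by fun_prop)]
    · refine lintegral_congr fun x => ?_
      simp only [Pi.mul_apply, hκ, rho]
      ring
    · refine Finset.measurable_prod _ fun j _ => ?_
      exact (measurable_gaussianPDF _ _).comp (measurable_pi_apply j)
  · intro j
    have := hC j.1.1 (Finset.mem_sigma.1 j.2).1
    unfold coordVar toIx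
    simp only
    split_ifs
    · simpa using this
    · simpa using this

lemma prod_count {I : ℕ} (l : Fin I → ℕ × ℕ × ℕ) (p : Fin I → ℕ) (r : ℕ → ℝ) :
    ∏ u ∈ (∑ i : Fin I, (2 * p i) • tripleMultiset (l i)).toFinset,
      r u ^ ((∑ i : Fin I, (2 * p i) • tripleMultiset (l i)).count u / 2) =
    ∏ i, (r (l i).1 * r (l i).2.1 * r (l i).2.2) ^ p i := by
  have hM : (∑ i : Fin I, (2 * p i) • tripleMultiset (l i)) =
      2 • ∑ i : Fin I, p i • tripleMultiset (l i) := by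
    rw [Finset.smul_sum]; simp only [mul_smul]
  rw [hM, Multiset.toFinset_nsmul _ _ two_ne_zero]
  simp only [Multiset.count_nsmul, Nat.mul_div_cancel_left _ two_pos]
  rw [← Finset.prod_multiset_map_count]
  have := map_sum (Multiset.mapAddMonoidHom r) (fun i => p i • tripleMultiset (l i)) Finset.univ
  simp only [Multiset.coe_mapAddMonoidHom] at this
  rw [this, Multiset.prod_sum]
  refine Finset.prod_congr rfl fun i _ => ?_
  rw [Multiset.map_nsmul, Multiset.prod_nsmul]
  simp [tripleMultiset, mul_assoc]

lemma Ibis_Ihat {Ω : Type*} (C : ℕ → ℝ) (a : ℕ → ℤ → Ω → ℂ) (l₁ l₂ l₃ p : ℕ) (ω : Ω)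
    (h1 : 0 < C l₁) (h2 : 0 < C l₂) (h3 : 0 < C l₃)
    (g1 : 0 < Chat a l₁ ω) (g2 : 0 < Chat a l₂ ω) (g3 : 0 < Chat a l₃ ω) :
    Ibis C a l₁ l₂ l₃ ω ^ (2 * p) = Ihat a l₁ l₂ l₃ ω ^ (2 * p) *
      (Chat a l₁ ω / C l₁ * (Chat a l₂ ω / C l₂) * (Chat a l₃ ω / C l₃)) ^ p := by
  rw [pow_mul, pow_mul, ← mul_pow]
  congr 1
  unfold Ibis Ihat
  rw [div_pow, div_pow, Real.sq_sqrt (by positivity), Real.sq_sqrt (by positivity)]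
  field_simp

lemma Bhat_tr {Ω Ω' : Type*} (a : ℕ → ℤ → Ω → ℂ) (b : ℕ → ℤ → Ω' → ℂ) (ω : Ω) (x : Ω')
    (l₁ l₂ l₃ : ℕ) (h1 : ∀ m ∈ mrange l₁, b l₁ m x = a l₁ m ω)
    (h2 : ∀ m ∈ mrange l₂, b l₂ m x = a l₂ m ω) (h3 : ∀ m ∈ mrange l₃, b l₃ m x = a l₃ m ω) :
    Bhat a l₁ l₂ l₃ ω = Bhat b l₁ l₂ l₃ x := by
  unfold Bhat
  refine Finset.sum_congr rfl fun m1 k1 => Finset.sum_congr rfl fun m2 k2 =>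
    Finset.sum_congr rfl fun m3 k3 => ?_
  rw [h1 _ k1, h2 _ k2, h3 _ k3]

lemma Chat_tr {Ω Ω' : Type*} (a : ℕ → ℤ → Ω → ℂ) (b : ℕ → ℤ → Ω' → ℂ) (ω : Ω) (x : Ω')
    (l : ℕ) (h : ∀ m ∈ mrange l, b l m x = a l m ω) :
    Chat a l ω = Chat b l x := by
  unfold Chat
  rw [Finset.sum_congr rfl fun m k => by rw [← h m k]]

/-- **Moment transfer identity** (equation (formest)): for ordered triples of positive
multipoles with even sums,
`E[∏ᵢ Î_{l_{i1}l_{i2}l_{i3}}^{2pᵢ}] = E[∏ᵢ I_{l_{i1}l_{i2}l_{i3}}^{2pᵢ}] · G[…]`. -/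
theorem moment_transfer (Ω : Type) (_ : MeasurableSpace Ω) (μ : Measure Ω)
    [IsProbabilityMeasure μ] (C : ℕ → ℝ) (a : ℕ → ℤ → Ω → ℂ) (hmod : CMBModel μ C a)
    (I : ℕ) (l : Fin I → ℕ × ℕ × ℕ) (p : Fin I → ℕ) (hp : ∀ i, 1 ≤ p i)
    (hord : ∀ i, 1 ≤ (l i).1 ∧ (l i).1 ≤ (l i).2.1 ∧ (l i).2.1 ≤ (l i).2.2 ∧
      Even ((l i).1 + (l i).2.1 + (l i).2.2)) :
    (∫ ω, ∏ i, (Ihat a (l i).1 (l i).2.1 (l i).2.2 ω) ^ (2 * p i) ∂μ) =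
      (∫ ω, ∏ i, (Ibis C a (l i).1 (l i).2.1 (l i).2.2 ω) ^ (2 * p i) ∂μ) *
        Gfactor l p := by
  set M : Multiset ℕ := ∑ i : Fin I, (2 * p i) • tripleMultiset (l i) with hM
  set S := M.toFinset with hSdef
  have hmem : ∀ i, (l i).1 ∈ S ∧ (l i).2.1 ∈ S ∧ (l i).2.2 ∈ S := by
    intro i
    have : ∀ u, u ∈ tripleMultiset (l i) → u ∈ S := by
      intro u hu
      rw [hSdef, Multiset.mem_toFinset, hM, Multiset.mem_sum]
      refine ⟨i, Finset.mem_univ _, ?_⟩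
      have := hp i
      exact Multiset.mem_nsmul.2 ⟨by omega, hu⟩
    refine ⟨this _ ?_, this _ ?_, this _ ?_⟩ <;> simp [tripleMultiset]
  have hS : ∀ u ∈ S, 1 ≤ u := by
    intro u hu
    rw [hSdef, Multiset.mem_toFinset, hM, Multiset.mem_sum] at hu
    obtain ⟨i, _, hi⟩ := hu
    have hi := (Multiset.mem_nsmul.1 hi).2
    obtain ⟨h1, h2, h3, _⟩ := hord i
    simp only [tripleMultiset, Multiset.insert_eq_cons, Multiset.mem_cons,
      Multiset.mem_singleton] at hi
    omega
  have hC : ∀ u ∈ S, 0 < C u := fun u hu => hmod.cPos u (hS u hu)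
  obtain ⟨κ, hκ⟩ := law hmod S hS
  have htr := fun u (hu : u ∈ S) (ω : Ω) m (hm : m ∈ mrange u) =>
    acf_eq hmod S hS u hu m hm ω
  have hB : ∀ i ω, Bhat a (l i).1 (l i).2.1 (l i).2.2 ω =
      Bhat (acf S) (l i).1 (l i).2.1 (l i).2.2 (fun j => coordFn a (toIx S hS j) ω) :=
    fun i ω => Bhat_tr _ _ _ _ _ _ _ (htr _ (hmem i).1 ω) (htr _ (hmem i).2.1 ω)
      (htr _ (hmem i).2.2 ω)
  have hCh : ∀ u ∈ S, ∀ ω, Chat a u ω =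
      Chat (acf S) u (fun j => coordFn a (toIx S hS j) ω) :=
    fun u hu ω => Chat_tr _ _ _ _ _ (htr u hu ω)
  have hIhat : ∀ i ω, Ihat a (l i).1 (l i).2.1 (l i).2.2 ω =
      Ihat (acf S) (l i).1 (l i).2.1 (l i).2.2 (fun j => coordFn a (toIx S hS j) ω) := by
    intro i ω
    unfold Ihat
    rw [hB, hCh _ (hmem i).1, hCh _ (hmem i).2.1, hCh _ (hmem i).2.2]
  have hIbis : ∀ i ω, Ibis C a (l i).1 (l i).2.1 (l i).2.2 ω =
      Ibis C (acf S) (l i).1 (l i).2.1 (l i).2.2 (fun j => coordFn a (toIx S hS j) ω) := by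
    intro i ω
    unfold Ibis
    rw [hB]
  simp only [hIhat, hIbis]
  have hnn : ∀ f : Fin I → ℝ, 0 ≤ ∏ i, f i ^ (2 * p i) := fun f =>
    Finset.prod_nonneg fun i _ => (even_two_mul (p i)).pow_nonneg _
  have hX : AEMeasurable (fun ω => fun j => coordFn a (toIx S hS j) ω) μ :=
    aemeasurable_pi_lambda _ fun j => coord_aem hmod _
  have hint : ∀ f : Fin I → (JJ S → ℝ) → ℝ, (∀ i, Measurable (f i)) →
      ∫ ω, ∏ i, f i (fun j => coordFn a (toIx S hS j) ω) ^ (2 * p i) ∂μ =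
      (κ * ∫⁻ x, ENNReal.ofReal (∏ i, f i x ^ (2 * p i)) * rho S C x).toReal := by
    intro f hf
    have hm : Measurable (fun x => ∏ i, f i x ^ (2 * p i)) := by fun_prop
    rw [integral_eq_lintegral_of_nonneg_ae (Filter.Eventually.of_forall fun ω => hnn _)
      (hm.comp_aemeasurable hX).aestronglyMeasurable]
    rw [hκ (fun x => ENNReal.ofReal (∏ i, f i x ^ (2 * p i))) (by fun_prop)]
  rw [hint (fun i x => Ihat (acf S) (l i).1 (l i).2.1 (l i).2.2 x) (fun i => by fun_prop),
    hint (fun i x => Ibis C (acf S) (l i).1 (l i).2.1 (l i).2.2 x) (fun i => by fun_prop)]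
  have hG0 : 0 ≤ Gfactor l p := Finset.prod_nonneg fun u _ => gfun_nonneg _ _
  have key := all_blocks S C hC
    (fun x => ENNReal.ofReal (∏ i, Ihat (acf S) (l i).1 (l i).2.1 (l i).2.2 x ^ (2 * p i)))
    (by fun_prop) (fun u s hs x => by simp only [Ihat_D S u s hs]) (fun u => M.count u / 2) S
    (Finset.Subset.refl S)
  have hae : ∫⁻ x, ENNReal.ofReal (∏ i, Ibis C (acf S) (l i).1 (l i).2.1 (l i).2.2 x ^ (2 * p i)) *
      rho S C x = ∫⁻ x, ENNReal.ofReal (∏ i, Ihat (acf S) (l i).1 (l i).2.1 (l i).2.2 x ^ (2 * p i)) *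
      ENNReal.ofReal (∏ u ∈ S, (Chat (acf S) u x / C u) ^ (M.count u / 2)) * rho S C x := by
    have hpos : ∀ᵐ x : JJ S → ℝ, ∀ u ∈ S, 0 < Rr S C u x :=
      (ae_ball_iff S.countable_toSet).2 fun u hu => Rr_pos S C u hu (hC u hu)
    refine lintegral_congr_ae ?_
    filter_upwards [hpos] with x hx
    have hch : ∀ u ∈ S, 0 < Chat (acf S) u x := by
      intro u hu
      refine lt_of_le_of_ne (Chat_nonneg _ _ _) fun h => ?_
      have := hx u hu
      simp [Rr, ← h] at this
    have hpc : ∏ u ∈ S, (Chat (acf S) u x / C u) ^ (M.count u / 2) = _ :=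
      prod_count l p (fun u => Chat (acf S) u x / C u)
    rw [← ENNReal.ofReal_mul (hnn _), hpc,
      ← Finset.prod_mul_distrib]
    congr 2
    refine Finset.prod_congr rfl fun i _ => ?_
    obtain ⟨h1, h2, h3⟩ := hmem i
    exact Ibis_Ihat C (acf S) _ _ _ _ x (hC _ h1) (hC _ h2) (hC _ h3) (hch _ h1) (hch _ h2)
      (hch _ h3)
  rw [hae, ← key, ← mul_assoc, ENNReal.toReal_mul]
  congr 1
  exact ENNReal.toReal_ofReal hG0

end
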